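/- arXiv:2009.07160 — 2 statements merged into one kernel-verified Lean document; each statement's English description precedes it below -/
import Mathlib

section
/- Bound on the radial period: For every L > 0 and ψ_L(r_L) < E < E_0, the period T(E,L) = 2 ∫_{r_-(E,L)}^{r_+(E,L)} dr / √(2E − 2ψ_L(r)) is finite and satisfies T(E,L) ≤ 2π r_+(E,L)²/√L ≤ 2π M_0²/(E² √L). -/
/-!
The potential `U₀` is convex as a function of `s = 1/r`, because `dU₀/ds = -r² U₀'(r) = -m₀(r)` and
`m₀` is nondecreasing. Hence on `[r₋, r₊]` it lies below its chord in the variable `1/r`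
(`potential_le_chord`). At the end points `ψ_L = E`, so comparing `E - ψ_L` with this chord gives
`2E - 2ψ_L(r) ≥ L (r - r₋)(r₊ - r) / (r² r₋ r₊) ≥ (L / r₊⁴) (r - r₋)(r₊ - r)`
(`kinetic_lower_bound`). The integrand of the period is thus dominated by
`(r₊² / √L) / √((r - r₋)(r₊ - r))`, and `∫ dr / √((r - r₋)(r₊ - r)) = π` over `[r₋, r₊]`
(`integral_one_div_sqrt`). This yields both finiteness and the first inequality.

For the second one, `U₀ + M₀/r` is nonincreasing, since `m₀ ≤ M₀`, and tends to `0` at infinity; thus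
`U₀(r) ≥ -M₀/r` (`neg_div_le_potential`), and `E = ψ_L(r₊) ≥ U₀(r₊)` forces `r₊ ≤ M₀/|E|`.
-/

open MeasureTheory Real Set Filter

noncomputable section

/-- The effective potential ψ_L(r) = U₀(r) + L/(2r²). -/
def psiEff (U0 : ℝ → ℝ) (L r : ℝ) : ℝ := U0 r + L / (2 * r ^ 2)

/-- The radial data of an isotropic Newtonian steady state: ρ₀ is the (radial)
    spatial density, m₀(r) = 4π ∫₀^r s² ρ₀(s) ds the mass function, and U₀ the
    radial potential, which satisfies U₀'(r) = m₀(r)/r² and U₀(r) → 0 as r → ∞. -/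
structure RadialSteadyState (ρ0 m0 U0 : ℝ → ℝ) : Prop where
  ρ0_cont : Continuous ρ0
  ρ0_nonneg : ∀ r, 0 ≤ ρ0 r
  ρ0_compSupp : HasCompactSupport ρ0
  ρ0_nontrivial : ∃ r, 0 ≤ r ∧ 0 < ρ0 r
  m0_def : ∀ r, m0 r = 4 * Real.pi * ∫ s in (0:ℝ)..r, s ^ 2 * ρ0 s
  U0_deriv : ∀ r > 0, HasDerivAt U0 (m0 r / r ^ 2) r
  U0_decay : Tendsto U0 atTop (nhds 0)

lemma hasDerivAt_arcsin_affine {a b x : ℝ} (hx : x ∈ Ioo a b) :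
    HasDerivAt (fun x => arcsin ((2 * x - a - b) / (b - a))) (1 / √((x - a) * (b - x))) x := by
  obtain ⟨h1, h2⟩ := hx
  have hab : 0 < b - a := by linarith
  have hlin : HasDerivAt (fun x : ℝ => (2 * x - a - b) / (b - a)) (2 / (b - a)) x := by
    have := ((((hasDerivAt_id x).const_mul 2).sub_const a).sub_const b).div_const (b - a)
    simpa using this
  have hne1 : (2 * x - a - b) / (b - a) ≠ -1 := by
    intro h; rw [div_eq_iff hab.ne'] at h; linarith
  have hne2 : (2 * x - a - b) / (b - a) ≠ 1 := by
    intro h; rw [div_eq_iff hab.ne'] at h; linarith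
  have := (hasDerivAt_arcsin hne1 hne2).comp x hlin
  refine HasDerivAt.congr_deriv this ?_
  have hq : 1 - ((2 * x - a - b) / (b - a)) ^ 2 = (2 / (b - a)) ^ 2 * ((x - a) * (b - x)) := by
    field_simp; ring
  have hs : 0 < √((x - a) * (b - x)) :=
    sqrt_pos.2 (mul_pos (by linarith) (by linarith))
  rw [hq, sqrt_mul (sq_nonneg _), sqrt_sq (by positivity)]
  field_simp

/-- Integrability is automatic: the integrand is the nonnegative derivative of a function that is
continuous up to the end points. -/
lemma integrableOn_one_div_sqrt (a b : ℝ) :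
    IntegrableOn (fun x => 1 / √((x - a) * (b - x))) (Ioc a b) :=
  intervalIntegral.integrableOn_deriv_of_nonneg
    (by fun_prop)
    (fun _ hx => hasDerivAt_arcsin_affine hx) (fun _ _ => by positivity)

lemma integral_one_div_sqrt {a b : ℝ} (hab : a < b) :
    ∫ x in a..b, 1 / √((x - a) * (b - x)) = π := by
  have hne : b - a ≠ 0 := by linarith
  rw [intervalIntegral.integral_eq_sub_of_hasDerivAt_of_le hab.le
    (f := fun x => arcsin ((2 * x - a - b) / (b - a))) (by fun_prop)
    (fun _ hx => hasDerivAt_arcsin_affine hx)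
    ((intervalIntegrable_iff_integrableOn_Ioc_of_le hab.le).2 (integrableOn_one_div_sqrt a b))]
  have h1 : (2 * b - a - b) / (b - a) = 1 := by rw [div_eq_iff hne]; ring
  have h2 : (2 * a - a - b) / (b - a) = -1 := by rw [div_eq_iff hne]; ring
  simp only [h1, h2, arcsin_one, arcsin_neg_one]
  ring

namespace RadialSteadyState

variable {ρ0 m0 U0 : ℝ → ℝ}

lemma monotone_m0 (h : RadialSteadyState ρ0 m0 U0) : Monotone m0 := by
  intro x y hxy
  have hc : Continuous fun s => s ^ 2 * ρ0 s := by have := h.ρ0_cont; fun_prop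
  have hi : ∀ a b, IntervalIntegrable (fun s => s ^ 2 * ρ0 s) volume a b :=
    fun a b => hc.intervalIntegrable a b
  rw [h.m0_def, h.m0_def,
    ← intervalIntegral.integral_add_adjacent_intervals (hi 0 x) (hi x y)]
  have := intervalIntegral.integral_nonneg (μ := volume) hxy
    (fun s _ => mul_nonneg (sq_nonneg s) (h.ρ0_nonneg s))
  gcongr
  linarith

/-- The derivative of the potential with respect to `s = 1/r` is `-m₀(1/s)`, which increases
with `s`. -/
lemma convexOn_inv (h : RadialSteadyState ρ0 m0 U0) :
    ConvexOn ℝ (Ioi 0) (fun s => U0 s⁻¹) := by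
  have hd : ∀ s ∈ Ioi (0 : ℝ), HasDerivAt (fun s => U0 s⁻¹) (-m0 s⁻¹) s := by
    intro s hs
    have hs : 0 < s := hs
    have := (h.U0_deriv s⁻¹ (inv_pos.2 hs)).comp s (hasDerivAt_inv hs.ne')
    refine HasDerivAt.congr_deriv this ?_
    have : s ≠ 0 := hs.ne'
    field_simp
  apply MonotoneOn.convexOn_of_deriv (convex_Ioi 0)
  · exact fun s hs => (hd s hs).continuousAt.continuousWithinAt
  · rw [interior_Ioi]
    exact fun s hs => (hd s hs).differentiableAt.differentiableWithinAt
  · rw [interior_Ioi]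
    intro s hs t ht hst
    rw [(hd s hs).deriv, (hd t ht).deriv]
    exact neg_le_neg (h.monotone_m0 (inv_anti₀ hs hst))

/-- The chord inequality for the potential in the variable `1/r`. -/
lemma potential_le_chord (h : RadialSteadyState ρ0 m0 U0) {a b r : ℝ} (ha : 0 < a)
    (hr : r ∈ Ioo a b) :
    U0 r ≤ b * (r - a) / (r * (b - a)) * U0 b + a * (b - r) / (r * (b - a)) * U0 a := by
  obtain ⟨h1, h2⟩ := hr
  have hr0 : 0 < r := by linarith
  have hb0 : 0 < b := by linarith
  have hba : 0 < b - a := by linarith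
  have hra : 0 < r - a := by linarith
  have hbr : 0 < b - r := by linarith
  have := h.convexOn_inv.2 (mem_Ioi.2 (inv_pos.2 hb0)) (mem_Ioi.2 (inv_pos.2 ha))
    (show 0 ≤ b * (r - a) / (r * (b - a)) by positivity)
    (show 0 ≤ a * (b - r) / (r * (b - a)) by positivity) (by field_simp; ring)
  have hpt : (b * (r - a) / (r * (b - a)) * b⁻¹ + a * (b - r) / (r * (b - a)) * a⁻¹)⁻¹ = r := by
    rw [inv_eq_iff_eq_inv]
    field_simp
    ring
  simpa only [smul_eq_mul, inv_inv, hpt] using this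

/-- If `a` and `b` are turning points for the energy `E`, the squared radial velocity `2E - 2ψ_L` is
bounded below on `(a, b)` by a quadratic with simple zeros at `a` and `b`. -/
lemma kinetic_lower_bound (h : RadialSteadyState ρ0 m0 U0) {L E a b r : ℝ} (hL : 0 < L)
    (ha : 0 < a) (hEa : psiEff U0 L a = E) (hEb : psiEff U0 L b = E) (hr : r ∈ Ioo a b) :
    L / b ^ 4 * ((r - a) * (b - r)) ≤ 2 * E - 2 * psiEff U0 L r := by
  have hch := h.potential_le_chord ha hr
  obtain ⟨h1, h2⟩ := hr
  have hr0 : 0 < r := by linarith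
  have hb0 : 0 < b := by linarith
  have hba : 0 < b - a := by linarith
  have hra : 0 < r - a := by linarith
  have hbr : 0 < b - r := by linarith
  have hUa : U0 a = E - L / (2 * a ^ 2) := by rw [← hEa, psiEff]; ring
  have hUb : U0 b = E - L / (2 * b ^ 2) := by rw [← hEb, psiEff]; ring
  -- The gap between the chord of `U₀` and `E - L/(2r²)` is exactly a quadratic in `1/r`.
  have hquad : 2 * E - 2 * (b * (r - a) / (r * (b - a)) * U0 b
      + a * (b - r) / (r * (b - a)) * U0 a + L / (2 * r ^ 2))
      = L / (r ^ 2 * a * b) * ((r - a) * (b - r)) := by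
    rw [hUa, hUb]
    field_simp
    ring
  have hden : r ^ 2 * a * b ≤ b ^ 4 := by
    calc r ^ 2 * a * b ≤ b ^ 2 * b * b := by gcongr; linarith
      _ = b ^ 4 := by ring
  calc L / b ^ 4 * ((r - a) * (b - r)) ≤ L / (r ^ 2 * a * b) * ((r - a) * (b - r)) := by gcongr
    _ ≤ 2 * E - 2 * psiEff U0 L r := by rw [← hquad, psiEff]; linarith

lemma neg_div_le_potential (h : RadialSteadyState ρ0 m0 U0) {M0 : ℝ}
    (hM0 : Tendsto m0 atTop (nhds M0)) {r : ℝ} (hr : 0 < r) : -(M0 / r) ≤ U0 r := by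
  have hd : ∀ s ∈ Ioi (0 : ℝ),
      HasDerivAt (fun s => U0 s + M0 * s⁻¹) (m0 s / s ^ 2 + M0 * (-(s ^ 2)⁻¹)) s :=
    fun s hs => (h.U0_deriv s hs).add ((hasDerivAt_inv (ne_of_gt hs)).const_mul M0)
  have hanti : AntitoneOn (fun s => U0 s + M0 * s⁻¹) (Ioi 0) := by
    apply antitoneOn_of_deriv_nonpos (convex_Ioi 0)
    · exact fun s hs => (hd s hs).continuousAt.continuousWithinAt
    · rw [interior_Ioi]
      exact fun s hs => (hd s hs).differentiableAt.differentiableWithinAt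
    · rw [interior_Ioi]
      intro s hs
      rw [(hd s hs).deriv]
      have hm : m0 s / s ^ 2 ≤ M0 / s ^ 2 := by
        gcongr
        exact h.monotone_m0.ge_of_tendsto hM0 s
      rw [div_eq_mul_inv M0] at hm
      linarith
  have hlim : Tendsto (fun s => U0 s + M0 * s⁻¹) atTop (nhds 0) := by
    simpa using h.U0_decay.add (tendsto_inv_atTop_zero.const_mul M0)
  have hnonneg : 0 ≤ U0 r + M0 * r⁻¹ := by
    apply le_of_tendsto hlim
    filter_upwards [eventually_ge_atTop r] with s hs
    exact hanti hr (lt_of_lt_of_le hr hs) hs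
  rw [div_eq_mul_inv]
  linarith

end RadialSteadyState

/-- Bound on the radial period (4.2)/(4.3): for L > 0 and ψ_L(r_L) < E < E₀, the
    period integral T(E,L) = 2∫_{r_-}^{r_+} dr/√(2E − 2ψ_L(r)) is finite and
    T(E,L) ≤ 2π r_+(E,L)²/√L ≤ 2π M₀²/(E² √L). -/
theorem radial_period_bound
    (ρ0 m0 U0 : ℝ → ℝ) (h : RadialSteadyState ρ0 m0 U0)
    (E0 : ℝ) (hE0 : E0 < 0)
    (rL : ℝ → ℝ)
    (hrL : ∀ L > 0, 0 < rL L ∧ IsMinOn (psiEff U0 L) (Ioi 0) (rL L) ∧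
      psiEff U0 L (rL L) < 0)
    (rm rp : ℝ → ℝ → ℝ)
    (hrmp : ∀ L > 0, ∀ E, psiEff U0 L (rL L) < E → E < 0 →
      0 < rm E L ∧ rm E L < rL L ∧ rL L < rp E L ∧
      psiEff U0 L (rm E L) = E ∧ psiEff U0 L (rp E L) = E)
    (M0 : ℝ) (hM0 : Tendsto m0 atTop (nhds M0)) (hM0pos : 0 < M0) :
    ∀ L > 0, ∀ E, psiEff U0 L (rL L) < E → E < E0 →
      IntegrableOn (fun r => 1 / Real.sqrt (2 * E - 2 * psiEff U0 L r))
        (Ioo (rm E L) (rp E L)) ∧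
      2 * (∫ r in rm E L..rp E L, 1 / Real.sqrt (2 * E - 2 * psiEff U0 L r)) ≤
        2 * Real.pi * (rp E L) ^ 2 / Real.sqrt L ∧
      2 * Real.pi * (rp E L) ^ 2 / Real.sqrt L ≤
        2 * Real.pi * M0 ^ 2 / (E ^ 2 * Real.sqrt L) := by
  intro L hL E hE1 hE2
  obtain ⟨ha, har, hrb, hEa, hEb⟩ := hrmp L hL E hE1 (hE2.trans hE0)
  have hE : E < 0 := hE2.trans hE0
  generalize rm E L = a at *
  generalize rp E L = b at *
  have hab : a < b := har.trans hrb
  have hb : 0 < b := ha.trans hab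
  have hsL : 0 < √L := sqrt_pos.2 hL
  have hlow := fun r (hr : r ∈ Ioo a b) => h.kinetic_lower_bound hL ha hEa hEb hr
  have hpos : ∀ r ∈ Ioo a b, 0 < (r - a) * (b - r) :=
    fun r hr => mul_pos (sub_pos.2 hr.1) (sub_pos.2 hr.2)
  have hbound : ∀ r ∈ Ioo a b, 1 / √(2 * E - 2 * psiEff U0 L r) ≤
      b ^ 2 / √L * (1 / √((r - a) * (b - r))) := by
    intro r hr
    have hs : 0 < √((r - a) * (b - r)) := sqrt_pos.2 (hpos r hr)
    have h1 : √L / b ^ 2 * √((r - a) * (b - r)) ≤ √(2 * E - 2 * psiEff U0 L r) := by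
      refine le_trans (le_of_eq ?_) (sqrt_le_sqrt (hlow r hr))
      have hLb : 0 ≤ L / b ^ 4 := div_nonneg hL.le (by positivity)
      rw [sqrt_mul hLb, sqrt_div hL.le, show b ^ 4 = (b ^ 2) ^ 2 by ring,
        sqrt_sq (by positivity)]
    calc 1 / √(2 * E - 2 * psiEff U0 L r) ≤ 1 / (√L / b ^ 2 * √((r - a) * (b - r))) := by gcongr
      _ = b ^ 2 / √L * (1 / √((r - a) * (b - r))) := by field_simp
  have hdom : IntegrableOn (fun r => b ^ 2 / √L * (1 / √((r - a) * (b - r)))) (Ioc a b) :=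
    (integrableOn_one_div_sqrt a b).const_mul _
  have hcont : ContinuousOn (fun r => 1 / √(2 * E - 2 * psiEff U0 L r)) (Ioo a b) := by
    intro r hr
    have hr0 : 0 < r := ha.trans hr.1
    have hU : ContinuousAt U0 r := (h.U0_deriv r hr0).continuousAt
    have hne : √(2 * E - 2 * psiEff U0 L r) ≠ 0 :=
      (sqrt_pos.2 (lt_of_lt_of_le
        (mul_pos (div_pos hL (by positivity)) (hpos r hr)) (hlow r hr))).ne'
    have hne2 : 2 * r ^ 2 ≠ 0 := by positivity
    have hpsi : ContinuousAt (fun r => psiEff U0 L r) r := by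
      unfold psiEff
      exact hU.add (continuousAt_const.div (by fun_prop) hne2)
    exact (continuousAt_const.div
      (continuousAt_const.sub (continuousAt_const.mul hpsi)).sqrt hne).continuousWithinAt
  have hint : IntegrableOn (fun r => 1 / √(2 * E - 2 * psiEff U0 L r)) (Ioo a b) := by
    refine (hdom.mono_set Ioo_subset_Ioc_self).mono'
      (hcont.aestronglyMeasurable measurableSet_Ioo) ?_
    filter_upwards [ae_restrict_mem measurableSet_Ioo] with r hr
    rw [norm_of_nonneg (by positivity)]
    exact hbound r hr
  refine ⟨hint, ?_, ?_⟩
  · have hle : ∫ r in a..b, 1 / √(2 * E - 2 * psiEff U0 L r) ≤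
        ∫ r in a..b, b ^ 2 / √L * (1 / √((r - a) * (b - r))) := by
      rw [intervalIntegral.integral_of_le hab.le, intervalIntegral.integral_of_le hab.le,
        integral_Ioc_eq_integral_Ioo, integral_Ioc_eq_integral_Ioo]
      exact setIntegral_mono_on hint (hdom.mono_set Ioo_subset_Ioc_self) measurableSet_Ioo hbound
    rw [intervalIntegral.integral_const_mul, integral_one_div_sqrt hab] at hle
    calc 2 * ∫ r in a..b, 1 / √(2 * E - 2 * psiEff U0 L r) ≤ 2 * (b ^ 2 / √L * π) := by gcongr
      _ = 2 * π * b ^ 2 / √L := by ring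
  · have hU := h.neg_div_le_potential hM0 hb
    have hlb : -(M0 / b) ≤ E := by
      have : 0 < L / (2 * b ^ 2) := by positivity
      rw [← hEb, psiEff]
      linarith
    have hEb' : b * -E ≤ M0 := by
      have : -E ≤ M0 / b := by linarith
      rwa [le_div_iff₀ hb, mul_comm] at this
    have hsq : b ^ 2 * E ^ 2 ≤ M0 ^ 2 := by
      have := pow_le_pow_left₀ (mul_nonneg hb.le (neg_nonneg.2 hE.le)) hEb' 2
      nlinarith
    have hE2' : 0 < E ^ 2 := sq_pos_of_neg hE
    rw [div_le_div_iff₀ hsL (by positivity)]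
    calc 2 * π * b ^ 2 * (E ^ 2 * √L) = 2 * π * √L * (b ^ 2 * E ^ 2) := by ring
      _ ≤ 2 * π * √L * M0 ^ 2 := by gcongr
      _ = 2 * π * M0 ^ 2 * √L := by ring

end
end

section
/- Positivity of the discriminant: For every L > 0 and every E with ψ_L(r_L) < E < 0, one has M_0² + 2EL > (M_0 − m_0(r_L))² ≥ 0, where r_L is the unique minimizer of ψ_L, which satisfies m_0(r_L) = L/r_L. -/
/-!
With `m = m₀(r_L)` and `r = r_L`, the relation `m = L / r` gives
`2 L ψ_L(r) = 2 L U₀(r) + m²`, so `E > ψ_L(r)` yields `2EL > 2 L U₀(r) + m²`. The claim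
`2EL > m² - 2 M₀ m` therefore follows from the point-mass lower bound `U₀(r) ≥ -M₀ / r`.
This bound holds because `U₀(r) + M₀ / r` has derivative `(m₀(r) - M₀) / r² ≤ 0`
and vanishes at infinity.
-/

open MeasureTheory Real Set Filter

noncomputable section

lemma RadialSteadyState.m0_monotone {ρ0 m0 U0 : ℝ → ℝ} (h : RadialSteadyState ρ0 m0 U0) :
    Monotone m0 := by
  have hc : Continuous fun s : ℝ => s ^ 2 * ρ0 s := (continuous_id.pow 2).mul h.ρ0_cont
  intro a b hab
  have hadd := intervalIntegral.integral_add_adjacent_intervals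
    (hc.intervalIntegrable (μ := volume) 0 a) (hc.intervalIntegrable a b)
  have hnn : 0 ≤ ∫ s in a..b, s ^ 2 * ρ0 s :=
    intervalIntegral.integral_nonneg hab fun s _ => mul_nonneg (sq_nonneg s) (h.ρ0_nonneg s)
  rw [h.m0_def a, h.m0_def b]
  exact mul_le_mul_of_nonneg_left (by linarith) (by positivity)

/-- The potential lies above that of a point mass `M0` at the origin. -/
lemma RadialSteadyState.neg_div_le_U0 {ρ0 m0 U0 : ℝ → ℝ} (h : RadialSteadyState ρ0 m0 U0)
    {M0 : ℝ} (hM0 : Tendsto m0 atTop (nhds M0)) {r : ℝ} (hr : 0 < r) :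
    -(M0 / r) ≤ U0 r := by
  have hd : ∀ x > 0, HasDerivAt (fun y => U0 y + M0 * y⁻¹)
      (m0 x / x ^ 2 + M0 * (-(x ^ 2)⁻¹)) x := fun x hx =>
    (h.U0_deriv x hx).add ((hasDerivAt_inv hx.ne').const_mul M0)
  have hanti : AntitoneOn (fun y => U0 y + M0 * y⁻¹) (Ioi 0) := by
    apply antitoneOn_of_deriv_nonpos (convex_Ioi 0)
    · exact fun x hx => (hd x hx).continuousAt.continuousWithinAt
    · rw [interior_Ioi]
      exact fun x hx => (hd x hx).differentiableAt.differentiableWithinAt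
    · rw [interior_Ioi]
      intro x hx
      rw [(hd x hx).deriv]
      have hle : m0 x ≤ M0 := h.m0_monotone.ge_of_tendsto hM0 x
      have hmul := mul_le_mul_of_nonneg_right hle (inv_nonneg.2 (sq_nonneg x))
      rw [div_eq_mul_inv]
      linarith
  have hlim : Tendsto (fun y => U0 y + M0 * y⁻¹) atTop (nhds 0) := by
    simpa using h.U0_decay.add (tendsto_inv_atTop_zero.const_mul M0)
  have hge : 0 ≤ U0 r + M0 * r⁻¹ := by
    refine le_of_tendsto hlim ?_
    filter_upwards [eventually_ge_atTop r] with y hy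
    exact hanti hr (lt_of_lt_of_le hr hy) hy
  rw [div_eq_mul_inv]
  linarith

/-- Positivity of the discriminant: for L > 0 and ψ_L(r_L) < E < 0,
    M₀² + 2EL > (M₀ − m₀(r_L))² ≥ 0, where r_L is the unique minimizer of ψ_L,
    characterized by m₀(r_L) = L/r_L. -/
theorem discriminant_positive
    (ρ0 m0 U0 : ℝ → ℝ) (h : RadialSteadyState ρ0 m0 U0)
    (rL : ℝ → ℝ)
    (hrL : ∀ L > 0, 0 < rL L ∧ IsMinOn (psiEff U0 L) (Ioi 0) (rL L) ∧
      psiEff U0 L (rL L) < 0 ∧ m0 (rL L) = L / rL L)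
    (M0 : ℝ) (hM0 : Tendsto m0 atTop (nhds M0)) :
    ∀ L > 0, ∀ E, psiEff U0 L (rL L) < E → E < 0 →
      M0 ^ 2 + 2 * E * L > (M0 - m0 (rL L)) ^ 2 ∧
      (M0 - m0 (rL L)) ^ 2 ≥ 0 := by
  intro L hL E hE _
  refine ⟨?_, sq_nonneg _⟩
  obtain ⟨hr, -, -, hm⟩ := hrL L hL
  have hU := mul_le_mul_of_nonneg_left (h.neg_div_le_U0 hM0 hr) hL.le
  have hEL := mul_lt_mul_of_pos_left hE hL
  have hpsi : L * psiEff U0 L (rL L) = L * U0 (rL L) + m0 (rL L) ^ 2 / 2 := by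
    rw [psiEff, hm]
    field_simp
  have hMm : L * -(M0 / rL L) = -(M0 * m0 (rL L)) := by
    rw [hm]
    ring
  rw [hpsi] at hEL
  rw [hMm] at hU
  nlinarith

end
end
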